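/- Let s ≥ 3 and let r_1 ≥ r_2 ≥ … ≥ r_s ≥ 2 be integers with r_1 ≥ 8 and r_s ≥ 4, and let G be an elementary abelian 2-group of order r_1·r_2⋯r_s. Then there exists an aperiodic logarithmic signature for G of type (r_1,…,r_s). -/

import Mathlib

/-!
Deform the trivial factorization of an abelian group `∏ i, E i` into its factors by replacing each
`E i` with the graph of a nonlinear function. Let `a`, `b`, `c` be distinct indices, `H` a proper
subgroup of `E a`, and `f : E a → E b`, `g : E a → E c` homomorphisms, jointly injective on `H`,
with nonzero `d, e ∈ H` such that `f d = 0` and `g e = 0`. The block of `a` consists of the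
`x + f x + g x` for `x ∈ H` and the `x ∉ H`; that of `c` of `0` and the `x + e + f e` for `x ≠ 0`;
that of any other `i` of `0` and the `x + d` for `x ≠ 0`.

To recover `x` from the sum `y` of its block elements, read off from `y a` whether `x a ∈ H`.
If not, `x c = y c`, and then `x b` is known. If so, `y b - x b = f (y a)`, because `f d = 0`;
this gives all `x i` with `i ≠ a, c`, and then `x c`, because `g` kills the contribution of `x c`
to `y a`. Finally `x a` follows from the other coordinates.

A period of a graph yields a direction in which the function has constant derivative. A function
that is a nonzero constant away from `0` and vanishes at `0` has no such direction once the group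
has three elements, and neither has a homomorphism injective on `H ≠ 0` and cut off outside `H`.
For an elementary abelian `p`-group, with `E i = 𝔽_p ^ k_i`, two coordinates of `E a` provide `f`
and `g`, and a third one makes `H` proper.
-/

/-- A subset `B` of a group is periodic if some `g ≠ 1` satisfies `g • B = B`. -/
def IsPeriodic {G : Type*} [Group G] [DecidableEq G] (B : Finset G) : Prop :=
  ∃ g : G, g ≠ 1 ∧ B.image (fun b => g * b) = B

/-- `B` is a logarithmic signature for `G`: every element of `G` has a unique ordered
factorization with one factor from each block. -/
def IsLogSig {G : Type*} [Group G] {s : ℕ} (B : Fin s → Finset G) : Prop :=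
  ∀ g : G, ∃! f : Fin s → G, (∀ i, f i ∈ B i) ∧ (List.ofFn f).prod = g

section LinearStructure

variable {E M N : Type*} [AddCommGroup E] [AddCommGroup M] [AddCommGroup N]

/-- In the terminology of Boolean functions, `u` is a linear structure of `q` if the derivative
`x ↦ q (x + u) - q x` of `q` in direction `u` is constant. -/
def IsLinearStructure (q : E → M) (u : E) : Prop :=
  ∃ v, ∀ x, q (x + u) = q x + v

theorem IsLinearStructure.of_addMonoidHom_add {h : E →+ M} {q : E → M} {u : E}
    (hu : IsLinearStructure (fun x => h x + q x) u) : IsLinearStructure q u := by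
  obtain ⟨v, hv⟩ := hu
  refine ⟨v - h u, fun x => ?_⟩
  have hx : h x + h u + q (x + u) = h x + q x + v := by rw [← map_add]; exact hv x
  rw [← add_right_inj (h x + h u), hx]
  abel

/-- The function equal to `v` away from `0` and to `0` at `0`: the simplest nonlinear
function on `E`. -/
noncomputable def constOffZero (v : M) : E → M :=
  ({0}ᶜ : Set E).indicator fun _ => v

theorem constOffZero_apply_zero (v : M) : constOffZero v (0 : E) = 0 := by
  simp [constOffZero]

theorem constOffZero_of_ne (v : M) {x : E} (hx : x ≠ 0) : constOffZero v x = v := by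
  simp [constOffZero, hx]

theorem constOffZero_zero (x : E) : constOffZero (0 : M) x = 0 := by
  simp [constOffZero]

theorem map_constOffZero (f : M →+ N) (v : M) (x : E) :
    f (constOffZero v x) = constOffZero (f v) x :=
  map_indicator f _ _ _

theorem constOffZero_pi_apply {ι : Type*} {F : ι → Type*} [∀ i, AddCommGroup (F i)]
    (v : ∀ i, F i) (x : E) (i : ι) : constOffZero v x i = constOffZero (v i) x :=
  map_constOffZero (Pi.evalAddMonoidHom F i) v x

theorem IsLinearStructure.eq_zero_of_constOffZero (hE : 3 ≤ ENat.card E) {v : M} (hv : v ≠ 0)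
    {u : E} (hu : IsLinearStructure (constOffZero v) u) : u = 0 := by
  obtain ⟨w, hw⟩ := hu
  by_contra hu0
  have hwv : v = w := by
    simpa [constOffZero_apply_zero, constOffZero_of_ne, hu0] using hw 0
  obtain ⟨y, hy0, hyu⟩ := ENat.exists_ne_ne_of_three_le hE 0 (-u)
  have hyu0 : y + u ≠ 0 := fun h => hyu (eq_neg_of_add_eq_zero_left h)
  have hw0 : w = 0 := by
    simpa [constOffZero_of_ne, hy0, hyu0] using hw y
  exact hv (hwv.trans hw0)

theorem IsLinearStructure.eq_zero_of_indicator {H : AddSubgroup E} (hbot : H ≠ ⊥) (htop : H ≠ ⊤)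
    {F : E →+ M} (hF : Set.InjOn F H) {u : E}
    (hu : IsLinearStructure ((H : Set E).indicator F) u) : u = 0 := by
  obtain ⟨w, hw⟩ := hu
  have hinj {x : E} (hx : x ∈ H) (h : F x = 0) : x = 0 :=
    hF hx H.zero_mem (h.trans (map_zero F).symm)
  by_cases huH : u ∈ H
  · obtain ⟨y, hy⟩ : ∃ y, y ∉ H := by
      by_contra! h
      exact htop ((AddSubgroup.eq_top_iff' H).mpr h)
    have hyu : y + u ∉ H := fun h => hy ((H.add_mem_cancel_right huH).mp h)
    have hw0 : w = 0 := by simpa [hy, hyu] using (hw y).symm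
    exact hinj huH (by simpa [huH, hw0] using hw 0)
  · obtain ⟨h, hH, h0⟩ := H.bot_or_exists_ne_zero.resolve_left hbot
    have hw0 : w = 0 := by simpa [huH] using (hw 0).symm
    have hhu : h + u ∉ H := fun hmem => huH ((H.add_mem_cancel_left hH).mp hmem)
    exact absurd (hinj hH (by simpa [hH, hhu, hw0] using (hw h).symm)) h0

end LinearStructure

/-- The data deforming the canonical factorization of `∏ i, E i` into its factors: two
homomorphisms from the factor `a` to the factors `b` and `c`, jointly injective on a proper
subgroup `H` of `E a` but each with a nonzero kernel element in `H`. -/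
structure Twist {ι : Type*} (E : ι → Type*) [∀ i, AddCommGroup (E i)] (a b c : ι) where
  a_ne_b : a ≠ b
  a_ne_c : a ≠ c
  b_ne_c : b ≠ c
  H : AddSubgroup (E a)
  H_ne_top : H ≠ ⊤
  f : E a →+ E b
  g : E a →+ E c
  eq_zero_of_mem : ∀ x ∈ H, f x = 0 → g x = 0 → x = 0
  d : E a
  d_mem : d ∈ H
  d_ne_zero : d ≠ 0
  f_d : f d = 0
  e : E a
  e_mem : e ∈ H
  e_ne_zero : e ≠ 0
  g_e : g e = 0

namespace Twist

variable {ι : Type*} {E : ι → Type*} [∀ i, AddCommGroup (E i)] {a b c : ι} (T : Twist E a b c)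

theorem H_ne_bot : T.H ≠ ⊥ := fun h =>
  T.d_ne_zero ((AddSubgroup.eq_bot_iff_forall T.H).mp h _ T.d_mem)

variable [DecidableEq ι]

/-- The homomorphism `(f, g)` from the factor `a` to the product. -/
def hom : E a →+ ∀ j, E j :=
  (AddMonoidHom.single E b).comp T.f + (AddMonoidHom.single E c).comp T.g

/-- The displacement of the `i`-th block of the twisted factorization from the factor `E i`. -/
noncomputable def offset : (i : ι) → E i → ∀ j, E j :=
  Function.update
    (Function.update (fun _ => constOffZero (Pi.single a T.d)) c
      (constOffZero (Pi.single a T.e + Pi.single b (T.f T.e))))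
    a ((T.H : Set (E a)).indicator T.hom)

/-- A parametrization of the `i`-th block of the twisted factorization by `E i`. -/
noncomputable def block (i : ι) (x : E i) : ∀ j, E j :=
  Pi.single i x + T.offset i x

theorem offset_a : T.offset a = (T.H : Set (E a)).indicator T.hom := by
  simp [offset]

theorem offset_c : T.offset c = constOffZero (Pi.single a T.e + Pi.single b (T.f T.e)) := by
  simp [offset, T.a_ne_c.symm]

theorem offset_of_ne {i : ι} (ha : i ≠ a) (hc : i ≠ c) :
    T.offset i = constOffZero (Pi.single a T.d) := by
  simp [offset, ha, hc]

theorem hom_apply_of_ne {j : ι} (hb : j ≠ b) (hc : j ≠ c) (x : E a) : T.hom x j = 0 := by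
  simp [hom, hb, hc]

theorem hom_apply_b (x : E a) : T.hom x b = T.f x := by
  simp [hom, T.b_ne_c]

theorem hom_apply_c (x : E a) : T.hom x c = T.g x := by
  simp [hom, T.b_ne_c.symm]

theorem injOn_hom : Set.InjOn T.hom T.H := by
  intro x hx y hy hxy
  refine sub_eq_zero.mp (T.eq_zero_of_mem _ (T.H.sub_mem hx hy) ?_ ?_)
  · rw [map_sub, sub_eq_zero, ← hom_apply_b, ← hom_apply_b, hxy]
  · rw [map_sub, sub_eq_zero, ← hom_apply_c, ← hom_apply_c, hxy]

theorem offset_a_apply (x : E a) (j : ι) :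
    T.offset a x j = (T.H : Set (E a)).indicator (fun y => T.hom y j) x := by
  rw [offset_a]
  exact map_indicator (Pi.evalAddMonoidHom E j) _ _ _

theorem offset_apply_self (i : ι) (x : E i) : T.offset i x i = 0 := by
  by_cases ha : i = a
  · subst ha
    simp [T.offset_a_apply, T.hom_apply_of_ne T.a_ne_b T.a_ne_c]
  by_cases hc : i = c
  · subst hc
    simp [T.offset_c, constOffZero_pi_apply, T.a_ne_c.symm, T.b_ne_c.symm, constOffZero_zero]
  · simp [T.offset_of_ne ha hc, constOffZero_pi_apply, ha, constOffZero_zero]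

theorem block_apply_self (i : ι) (x : E i) : T.block i x i = x := by
  simp [block, offset_apply_self]

theorem eq_zero_of_isLinearStructure_block {i : ι} (hE : 3 ≤ ENat.card (E i)) {u : E i}
    (hu : IsLinearStructure (T.block i) u) : u = 0 := by
  replace hu : IsLinearStructure (T.offset i) u :=
    IsLinearStructure.of_addMonoidHom_add (h := AddMonoidHom.single E i) hu
  by_cases ha : i = a
  · subst ha
    rw [offset_a] at hu
    exact hu.eq_zero_of_indicator T.H_ne_bot T.H_ne_top T.injOn_hom
  by_cases hc : i = c
  · subst hc
    rw [offset_c] at hu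
    refine hu.eq_zero_of_constOffZero hE fun h => T.e_ne_zero ?_
    simpa [T.a_ne_b] using congrFun h a
  · rw [T.offset_of_ne ha hc] at hu
    exact hu.eq_zero_of_constOffZero hE (Pi.single_ne_zero_iff.mpr T.d_ne_zero)

section Sum

variable [Fintype ι] (x : ∀ i, E i)

theorem sum_block_apply (j : ι) :
    (∑ i, T.block i (x i)) j = x j + ∑ i, T.offset i (x i) j := by
  simp only [block, Finset.sum_add_distrib]
  rw [Finset.univ_sum_single, Pi.add_apply, Finset.sum_apply]

theorem sum_block_apply_a : (∑ i, T.block i (x i)) a =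
    x a + (constOffZero T.e (x c) + ∑ i ∈ {a, c}ᶜ, constOffZero T.d (x i)) := by
  have hc : T.offset c (x c) a = constOffZero T.e (x c) := by
    simp [T.offset_c, constOffZero_pi_apply, T.a_ne_b]
  have hrest : ∀ i ∈ ({a, c}ᶜ : Finset ι), T.offset i (x i) a = constOffZero T.d (x i) := by
    intro i hi
    simp only [Finset.mem_compl, Finset.mem_insert, Finset.mem_singleton, not_or] at hi
    simp [T.offset_of_ne hi.1 hi.2, constOffZero_pi_apply]
  rw [sum_block_apply, ← Finset.sum_add_sum_compl {a, c}, Finset.sum_pair T.a_ne_c,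
    offset_apply_self, zero_add, hc, Finset.sum_congr rfl hrest]

theorem sum_block_apply_b : (∑ i, T.block i (x i)) b =
    x b + ((T.H : Set (E a)).indicator T.f (x a) + constOffZero (T.f T.e) (x c)) := by
  rw [sum_block_apply, Fintype.sum_eq_add a c T.a_ne_c fun i hi => ?_]
  · simp [T.offset_a_apply, T.hom_apply_b, T.offset_c, constOffZero_pi_apply, T.a_ne_b.symm]
  · simp [T.offset_of_ne hi.1 hi.2, constOffZero_pi_apply, T.a_ne_b.symm, constOffZero_zero]

theorem sum_block_apply_c :
    (∑ i, T.block i (x i)) c = x c + (T.H : Set (E a)).indicator T.g (x a) := by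
  rw [sum_block_apply, Fintype.sum_eq_single a fun i ha => ?_]
  · simp [T.offset_a_apply, T.hom_apply_c]
  by_cases hc : i = c
  · subst hc
    exact T.offset_apply_self i _
  · simp [T.offset_of_ne ha hc, constOffZero_pi_apply, T.a_ne_c.symm, constOffZero_zero]

theorem sum_block_apply_of_ne {j : ι} (ha : j ≠ a) (hb : j ≠ b) (hc : j ≠ c) :
    (∑ i, T.block i (x i)) j = x j := by
  rw [sum_block_apply, Finset.sum_eq_zero fun i _ => ?_, add_zero]
  by_cases hia : i = a
  · subst hia
    simp [T.offset_a_apply, T.hom_apply_of_ne hb hc]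
  by_cases hic : i = c
  · subst hic
    simp [T.offset_c, constOffZero_pi_apply, ha, hb, constOffZero_zero]
  · simp [T.offset_of_ne hia hic, constOffZero_pi_apply, ha, constOffZero_zero]

theorem sum_block_apply_a_mem_iff : (∑ i, T.block i (x i)) a ∈ T.H ↔ x a ∈ T.H := by
  have hmem {i : ι} {v : E a} (hv : v ∈ T.H) : constOffZero v (x i) ∈ T.H := by
    by_cases h : x i = 0
    · simp [h, constOffZero_apply_zero, T.H.zero_mem]
    · simpa [constOffZero_of_ne v h] using hv
  rw [sum_block_apply_a]
  exact T.H.add_mem_cancel_right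
    (T.H.add_mem (hmem T.e_mem) (T.H.sum_mem fun i _ => hmem T.d_mem))

theorem f_sum_block_apply_a :
    T.f ((∑ i, T.block i (x i)) a) = T.f (x a) + constOffZero (T.f T.e) (x c) := by
  rw [sum_block_apply_a]
  simp [map_constOffZero, T.f_d, constOffZero_zero]

theorem g_sum_block_apply_a : T.g ((∑ i, T.block i (x i)) a) =
    T.g (x a) + ∑ i ∈ {a, c}ᶜ, constOffZero (T.g T.d) (x i) := by
  rw [sum_block_apply_a]
  simp [map_constOffZero, T.g_e, constOffZero_zero]

theorem sum_block_apply_b_of_mem (h : x a ∈ T.H) :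
    (∑ i, T.block i (x i)) b = x b + T.f ((∑ i, T.block i (x i)) a) := by
  rw [sum_block_apply_b, f_sum_block_apply_a, Set.indicator_of_mem h]

theorem sum_block_apply_b_of_notMem (h : x a ∉ T.H) :
    (∑ i, T.block i (x i)) b = x b + constOffZero (T.f T.e) (x c) := by
  rw [sum_block_apply_b, Set.indicator_of_notMem h, zero_add]

theorem sum_block_apply_c_of_mem (h : x a ∈ T.H) : (∑ i, T.block i (x i)) c =
    x c + (T.g ((∑ i, T.block i (x i)) a) - ∑ i ∈ {a, c}ᶜ, constOffZero (T.g T.d) (x i)) := by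
  rw [sum_block_apply_c, g_sum_block_apply_a, Set.indicator_of_mem h, add_sub_cancel_right]

theorem sum_block_apply_c_of_notMem (h : x a ∉ T.H) : (∑ i, T.block i (x i)) c = x c := by
  rw [sum_block_apply_c, Set.indicator_of_notMem h, add_zero]

variable {x} {y : ∀ i, E i}

theorem eq_of_sum_block_eq_of_ne (hxy : ∑ i, T.block i (x i) = ∑ i, T.block i (y i)) {j : ι}
    (ha : j ≠ a) : x j = y j := by
  have hH : x a ∈ T.H ↔ y a ∈ T.H := by
    rw [← sum_block_apply_a_mem_iff, hxy, sum_block_apply_a_mem_iff]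
  have hrest {j : ι} (ha : j ≠ a) (hb : j ≠ b) (hc : j ≠ c) : x j = y j := by
    rw [← T.sum_block_apply_of_ne x ha hb hc, hxy, T.sum_block_apply_of_ne y ha hb hc]
  have eb := congrFun hxy b
  have ec := congrFun hxy c
  have hbc : x b = y b ∧ x c = y c := by
    by_cases h : x a ∈ T.H
    · rw [T.sum_block_apply_b_of_mem x h, T.sum_block_apply_b_of_mem y (hH.mp h), hxy,
        add_left_inj] at eb
      have hsum : ∑ i ∈ {a, c}ᶜ, constOffZero (T.g T.d) (x i) =
          ∑ i ∈ {a, c}ᶜ, constOffZero (T.g T.d) (y i) := by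
        refine Finset.sum_congr rfl fun i hi => ?_
        simp only [Finset.mem_compl, Finset.mem_insert, Finset.mem_singleton, not_or] at hi
        obtain rfl | hb := eq_or_ne i b
        · rw [eb]
        · rw [hrest hi.1 hb hi.2]
      rw [T.sum_block_apply_c_of_mem x h, T.sum_block_apply_c_of_mem y (hH.mp h), hxy, hsum,
        add_left_inj] at ec
      exact ⟨eb, ec⟩
    · rw [T.sum_block_apply_c_of_notMem x h, T.sum_block_apply_c_of_notMem y (mt hH.mpr h)] at ec
      rw [T.sum_block_apply_b_of_notMem x h, T.sum_block_apply_b_of_notMem y (mt hH.mpr h), ec,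
        add_left_inj] at eb
      exact ⟨eb, ec⟩
  obtain rfl | hb := eq_or_ne j b
  · exact hbc.1
  obtain rfl | hc := eq_or_ne j c
  · exact hbc.2
  · exact hrest ha hb hc

theorem sum_block_injective :
    Function.Injective fun x : ∀ i, E i => ∑ i, T.block i (x i) := by
  intro x y (hxy : ∑ i, T.block i (x i) = ∑ i, T.block i (y i))
  have hne {j : ι} (ha : j ≠ a) : x j = y j := T.eq_of_sum_block_eq_of_ne hxy ha
  funext j
  obtain rfl | ha := eq_or_ne j a
  · have ej := congrFun hxy j
    have hsum : ∑ i ∈ {j, c}ᶜ, constOffZero T.d (x i) = ∑ i ∈ {j, c}ᶜ, constOffZero T.d (y i) :=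
      Finset.sum_congr rfl fun i hi => by rw [hne (by rintro rfl; simp at hi)]
    rwa [sum_block_apply_a, sum_block_apply_a, hne T.a_ne_c.symm, hsum, add_left_inj] at ej
  · exact hne ha

end Sum

end Twist

section Coordinates

variable {K : Type*} [AddCommGroup K]

theorem mem_pi_compl_pair_bot {α : Type*} {u v : α} {x : α → K} :
    x ∈ AddSubgroup.pi {u, v}ᶜ (fun _ => (⊥ : AddSubgroup K)) ↔
      ∀ t, t ≠ u → t ≠ v → x t = 0 := by
  simp [AddSubgroup.mem_pi]

theorem nonempty_twist_pi [Nontrivial K] {ι : Type*} {κ : ι → Type*} [∀ i, Nonempty (κ i)]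
    {a b c : ι} (hab : a ≠ b) (hac : a ≠ c) (hbc : b ≠ c) (ha : 3 ≤ ENat.card (κ a)) :
    Nonempty (Twist (fun i => κ i → K) a b c) := by
  classical
  obtain ⟨k, hk⟩ := exists_ne (0 : K)
  obtain ⟨u⟩ : Nonempty (κ a) := inferInstance
  obtain ⟨v, hvu, -⟩ := ENat.exists_ne_ne_of_three_le ha u u
  obtain ⟨w, hwu, hwv⟩ := ENat.exists_ne_ne_of_three_le ha u v
  obtain ⟨ub⟩ : Nonempty (κ b) := inferInstance
  obtain ⟨uc⟩ : Nonempty (κ c) := inferInstance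
  have hsingle {t t' : κ a} (h : t' ≠ t) : (Pi.single t k : κ a → K) t' = 0 :=
    Pi.single_eq_of_ne (M := fun _ => K) h k
  refine ⟨{
    a_ne_b := hab
    a_ne_c := hac
    b_ne_c := hbc
    H := AddSubgroup.pi {u, v}ᶜ fun _ => ⊥
    f := (AddMonoidHom.single _ ub).comp (Pi.evalAddMonoidHom _ u)
    g := (AddMonoidHom.single _ uc).comp (Pi.evalAddMonoidHom _ v)
    d := Pi.single v k
    e := Pi.single u k
    H_ne_top := fun htop => ?_
    eq_zero_of_mem := fun x hx hf hg => ?_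
    d_mem := mem_pi_compl_pair_bot.mpr fun _ _ hv => hsingle hv
    e_mem := mem_pi_compl_pair_bot.mpr fun _ hu _ => hsingle hu
    d_ne_zero := Pi.single_ne_zero_iff.mpr hk
    e_ne_zero := Pi.single_ne_zero_iff.mpr hk
    f_d := by simp [hvu.symm]
    g_e := by simp [hvu] }⟩
  · have hw : (Pi.single w k : κ a → K) w = 0 :=
      mem_pi_compl_pair_bot.mp (htop ▸ AddSubgroup.mem_top _) w hwu hwv
    exact hk (by simpa using hw)
  · have hu : x u = 0 := by simpa using hf
    have hv : x v = 0 := by simpa using hg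
    funext t
    obtain rfl | htu := eq_or_ne t u
    · exact hu
    obtain rfl | htv := eq_or_ne t v
    · exact hv
    · exact mem_pi_compl_pair_bot.mp hx t htu htv

end Coordinates

theorem isLogSig_image_univ {G : Type*} [Group G] [DecidableEq G] {s : ℕ} {E : Fin s → Type*}
    [∀ i, Fintype (E i)] {φ : (i : Fin s) → E i → G}
    (hφ : Function.Bijective fun x : ∀ i, E i => (List.ofFn fun i => φ i (x i)).prod) :
    IsLogSig fun i => Finset.univ.image (φ i) := by
  intro g
  obtain ⟨x, hx⟩ := hφ.2 g
  refine ⟨fun i => φ i (x i), ⟨fun i => Finset.mem_image_of_mem _ (Finset.mem_univ _), hx⟩, ?_⟩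
  rintro f ⟨hf, hfg⟩
  simp only [Finset.mem_image, Finset.mem_univ, true_and] at hf
  choose y hy using hf
  obtain rfl : (fun i => φ i (y i)) = f := funext hy
  rw [hφ.1 (hfg.trans hx.symm)]

theorem not_isPeriodic_image_univ {G E M : Type*} [Group G] [DecidableEq G] [AddCommGroup E]
    [Fintype E] [AddCommGroup M] (ψ : Multiplicative M ≃* G) {φ : E → M} {π : M →+ E}
    (hπ : Function.LeftInverse π φ) (hφ : ∀ u, IsLinearStructure φ u → u = 0) :
    ¬ IsPeriodic (Finset.univ.image fun x => ψ (Multiplicative.ofAdd (φ x))) := by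
  rintro ⟨g, hg, hperiod⟩
  obtain ⟨m, rfl⟩ : ∃ m : M, ψ (Multiplicative.ofAdd m) = g := ⟨(ψ.symm g).toAdd, by simp⟩
  have hshift (x : E) : φ (x + π m) = φ x + m := by
    have hmem : ψ (Multiplicative.ofAdd m) * ψ (Multiplicative.ofAdd (φ x)) ∈
        Finset.univ.image fun x => ψ (Multiplicative.ofAdd (φ x)) := by
      rw [← hperiod]
      exact Finset.mem_image_of_mem _ (Finset.mem_image_of_mem _ (Finset.mem_univ x))
    obtain ⟨y, -, hy⟩ := Finset.mem_image.mp hmem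
    have hym : φ y = φ x + m := by
      rw [← map_mul, ψ.apply_eq_iff_eq, ← ofAdd_add, add_comm] at hy
      exact hy
    rw [← hym, ← hπ y, hym, map_add, hπ]
  have hπm : π m = 0 := hφ _ ⟨m, hshift⟩
  have hm : m = 0 := by simpa [hπm] using hshift 0
  exact hg (by simp [hm])

theorem Twist.exists_isLogSig {G : Type*} [Group G] [DecidableEq G] {s : ℕ} {E : Fin s → Type*}
    [∀ i, AddCommGroup (E i)] [∀ i, Fintype (E i)] {a b c : Fin s} (T : Twist E a b c)
    (hE : ∀ i, 2 < Fintype.card (E i)) (ψ : Multiplicative (∀ i, E i) ≃* G) :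
    ∃ B : Fin s → Finset G, IsLogSig B ∧ (∀ i, (B i).card = Fintype.card (E i)) ∧
      ∀ i, ¬ IsPeriodic (B i) := by
  have hprod (x : ∀ i, E i) :
      (List.ofFn fun i => ψ (Multiplicative.ofAdd (T.block i (x i)))).prod =
        ψ (Multiplicative.ofAdd (∑ i, T.block i (x i))) := by
    rw [ofAdd_sum, ← List.prod_ofFn, map_list_prod, List.map_ofFn]
    rfl
  have hleft (i : Fin s) : Function.LeftInverse (Pi.evalAddMonoidHom E i) (T.block i) :=
    T.block_apply_self i
  refine ⟨_, isLogSig_image_univ (φ := fun i x => ψ (Multiplicative.ofAdd (T.block i x))) ?_,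
    fun i => ?_, fun i => not_isPeriodic_image_univ ψ (hleft i) fun u =>
      T.eq_zero_of_isLinearStructure_block ?_⟩
  · simp only [hprod]
    exact ψ.bijective.comp (Multiplicative.ofAdd.bijective.comp
      (Finite.injective_iff_bijective.mp T.sum_block_injective))
  · exact Finset.card_image_of_injective _
      (ψ.injective.comp (Multiplicative.ofAdd.injective.comp (hleft i).injective))
  · rw [ENat.card_eq_coe_fintype_card]
    exact_mod_cast hE i

theorem nonempty_linearEquiv_of_natCard_eq {K V W : Type*} [DivisionRing K] [Finite K]
    [AddCommGroup V] [Module K V] [Finite V] [AddCommGroup W] [Module K W] [Finite W]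
    (hcard : Nat.card V = Nat.card W) : Nonempty (V ≃ₗ[K] W) := by
  rw [Module.natCard_eq_pow_finrank (K := K) (V := V),
    Module.natCard_eq_pow_finrank (K := K) (V := W)] at hcard
  exact ⟨LinearEquiv.ofFinrankEq V W (Nat.pow_right_injective Finite.one_lt_card hcard)⟩

theorem nonempty_mulEquiv_of_pow_eq_one {p : ℕ} [Fact p.Prime] {G M : Type*} [CommGroup G]
    [Finite G] (hG : ∀ g : G, g ^ p = 1) [AddCommGroup M] [Module (ZMod p) M] [Finite M]
    (hcard : Nat.card M = Nat.card G) : Nonempty (Multiplicative M ≃* G) := by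
  let : Module (ZMod p) (Additive G) := AddCommGroup.zmodModule fun g => hG g.toMul
  obtain ⟨e⟩ := nonempty_linearEquiv_of_natCard_eq (K := ZMod p) (V := M) (W := Additive G) hcard
  exact ⟨AddEquiv.toMultiplicativeLeft e.toAddEquiv⟩

theorem stmt5_general {p : ℕ} [Fact p.Prime] {G : Type*} [CommGroup G] [Fintype G]
    [DecidableEq G] (hG : ∀ g : G, g ^ p = 1) {s : ℕ} (hs : 3 ≤ s) {r : Fin s → ℕ}
    (hr : ∀ i, 2 < r i) {a : Fin s} (ha : p ^ 3 ≤ r a) (hcard : Fintype.card G = ∏ i, r i) :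
    ∃ B : Fin s → Finset G, IsLogSig B ∧ (∀ i, (B i).card = r i) ∧
      ∀ i, ¬ IsPeriodic (B i) := by
  have hp : p.Prime := Fact.out
  have hpow (i : Fin s) : ∃ k, r i = p ^ k := by
    have hpG : IsPGroup p G := fun g => ⟨1, by rw [pow_one, hG]⟩
    obtain ⟨n, hn⟩ := hpG.exists_card_eq
    have hdvd : r i ∣ p ^ n := by
      rw [← hn, Nat.card_eq_fintype_card, hcard]
      exact Finset.dvd_prod_of_mem r (Finset.mem_univ i)
    obtain ⟨k, -, hk⟩ := (Nat.dvd_prime_pow hp).mp hdvd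
    exact ⟨k, hk⟩
  choose l hl using hpow
  obtain rfl : r = fun i => p ^ l i := funext hl
  have hne (i : Fin s) : Nonempty (Fin (l i)) := by
    refine Fin.pos_iff_nonempty.mp (Nat.pos_of_ne_zero fun h => ?_)
    simpa [h] using hr i
  have hla : 3 ≤ ENat.card (Fin (l a)) := by
    simpa using (Nat.pow_le_pow_iff_right hp.one_lt).mp ha
  have hs' : 3 ≤ ENat.card (Fin s) := by simpa using hs
  obtain ⟨b, hba, -⟩ := ENat.exists_ne_ne_of_three_le hs' a a
  obtain ⟨c, hca, hcb⟩ := ENat.exists_ne_ne_of_three_le hs' a b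
  obtain ⟨T⟩ := nonempty_twist_pi (K := ZMod p) (κ := fun i => Fin (l i)) hba.symm hca.symm
    hcb.symm hla
  obtain ⟨ψ⟩ := nonempty_mulEquiv_of_pow_eq_one (M := ∀ i, Fin (l i) → ZMod p) hG
    (by simp [hcard])
  simpa using T.exists_isLogSig (by simpa using hr) ψ

/-- Every elementary abelian 2-group of order `r₁ ⋯ r_s`, where `s ≥ 3`,
`r₁ ≥ ⋯ ≥ r_s ≥ 2`, `r₁ ≥ 8` and `r_s ≥ 4`, has an aperiodic logarithmic signature
of type `(r₁, …, r_s)`. -/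
theorem stmt5 {G : Type*} [Group G] [Fintype G] [DecidableEq G]
    (hG : ∀ g : G, g * g = 1)
    (s : ℕ) (hs : 3 ≤ s) (r : Fin s → ℕ)
    (hanti : ∀ i j : Fin s, i ≤ j → r j ≤ r i)
    (h2 : ∀ i, 2 ≤ r i)
    (h8 : 8 ≤ r ⟨0, by omega⟩) (h4 : 4 ≤ r ⟨s - 1, by omega⟩)
    (hcard : Fintype.card G = ∏ i, r i) :
    ∃ B : Fin s → Finset G, IsLogSig B ∧ (∀ i, (B i).card = r i) ∧
      ∀ i, ¬ IsPeriodic (B i) := by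
  let : CommGroup G :=
    { mul_comm := Commute.of_orderOf_dvd_two fun g => orderOf_dvd_of_pow_eq_one (pow_two g ▸ hG g) }
  exact stmt5_general (p := 2) (fun g => pow_two g ▸ hG g) hs
    (fun i => lt_of_lt_of_le (by norm_num)
      (h4.trans (hanti i _ (Fin.mk_le_mk.mpr (Nat.le_sub_one_of_lt i.isLt))))) h8 hcard
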